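/- Let t₁, t₂ > 0 with t₁ + t₂ = 1. Then there exists no σ-finite measure φ on Gr(V) (with the cylinder σ-algebra) that is GLB-invariant, i.e. φ(g·A) = φ(A) for every g ∈ GLB and measurable A, and is equivalent to η_{t₁,t₂}, i.e. φ and η_{t₁,t₂} are mutually absolutely continuous. (Proposition 5.8: nonexistence of an equivalent invariant measure on the grassmannian.) -/

import Mathlib

open MeasureTheory

variable (F : Type) [Field F] [Fintype F] [DecidableEq F]

/-- `V = ⊕_{i≥0} F`: the `F`-vector space of finitely supported sequences. -/
abbrev Vinf := ℕ →₀ F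

/-- `V_n`: the span of the first `n` standard basis vectors of `V`. -/
def Vn (n : ℕ) : Submodule F (Vinf F) where
  carrier := {v | ∀ i : ℕ, n ≤ i → v i = 0}
  add_mem' := by
    intro a b ha hb i hi
    simp [Finsupp.add_apply, ha i hi, hb i hi]
  zero_mem' := by
    intro i hi
    simp
  smul_mem' := by
    intro c v hv i hi
    simp [Finsupp.smul_apply, hv i hi]

/-- The group `GLB` of `F`-linear automorphisms `g` of `V` with `g(V_n) = V_n` for all
sufficiently large `n`. -/
def GLBgrp : Subgroup ((Vinf F) ≃ₗ[F] (Vinf F)) where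
  carrier := {g | ∃ N : ℕ, ∀ n : ℕ, N ≤ n →
    Submodule.map (g : (Vinf F) →ₗ[F] (Vinf F)) (Vn F n) = Vn F n}
  one_mem' := by
    refine ⟨0, fun n _ => ?_⟩
    have h1 : ((1 : (Vinf F) ≃ₗ[F] (Vinf F)) : (Vinf F) →ₗ[F] (Vinf F)) = LinearMap.id := by
      ext x; rfl
    rw [h1, Submodule.map_id]
  mul_mem' := by
    rintro g h ⟨Ng, hg⟩ ⟨Nh, hh⟩
    refine ⟨max Ng Nh, fun n hn => ?_⟩
    have h1 : ((g * h : (Vinf F) ≃ₗ[F] (Vinf F)) : (Vinf F) →ₗ[F] (Vinf F))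
        = ((g : (Vinf F) →ₗ[F] (Vinf F)).comp (h : (Vinf F) →ₗ[F] (Vinf F))) := by
      ext x; rfl
    rw [h1, Submodule.map_comp, hh n (le_trans (le_max_right _ _) hn),
      hg n (le_trans (le_max_left _ _) hn)]
  inv_mem' := by
    rintro g ⟨N, hg⟩
    refine ⟨N, fun n hn => ?_⟩
    conv_lhs => rw [← hg n hn]
    rw [← Submodule.map_comp]
    have h1 : ((g⁻¹ : (Vinf F) ≃ₗ[F] (Vinf F)) : (Vinf F) →ₗ[F] (Vinf F)).comp
        ((g : (Vinf F) →ₗ[F] (Vinf F))) = LinearMap.id := by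
      have h0 : ((g⁻¹ * g : (Vinf F) ≃ₗ[F] (Vinf F)) : (Vinf F) →ₗ[F] (Vinf F))
          = ((g⁻¹ : (Vinf F) ≃ₗ[F] (Vinf F)) : (Vinf F) →ₗ[F] (Vinf F)).comp
            ((g : (Vinf F) →ₗ[F] (Vinf F))) := by
        ext x; rfl
      rw [← h0, inv_mul_cancel]
      ext x; rfl
    rw [h1, Submodule.map_id]

/-- The Borel subgroup `B ⊆ GLB` of automorphisms with `g(V_n) = V_n` for all `n`. -/
def Bgrp : Subgroup ((Vinf F) ≃ₗ[F] (Vinf F)) where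
  carrier := {g | ∀ n : ℕ,
    Submodule.map (g : (Vinf F) →ₗ[F] (Vinf F)) (Vn F n) = Vn F n}
  one_mem' := by
    intro n
    have h1 : ((1 : (Vinf F) ≃ₗ[F] (Vinf F)) : (Vinf F) →ₗ[F] (Vinf F)) = LinearMap.id := by
      ext x; rfl
    rw [h1, Submodule.map_id]
  mul_mem' := by
    intro g h hg hh n
    have h1 : ((g * h : (Vinf F) ≃ₗ[F] (Vinf F)) : (Vinf F) →ₗ[F] (Vinf F))
        = ((g : (Vinf F) →ₗ[F] (Vinf F)).comp (h : (Vinf F) →ₗ[F] (Vinf F))) := by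
      ext x; rfl
    rw [h1, Submodule.map_comp, hh n, hg n]
  inv_mem' := by
    intro g hg n
    conv_lhs => rw [← hg n]
    rw [← Submodule.map_comp]
    have h1 : ((g⁻¹ : (Vinf F) ≃ₗ[F] (Vinf F)) : (Vinf F) →ₗ[F] (Vinf F)).comp
        ((g : (Vinf F) →ₗ[F] (Vinf F))) = LinearMap.id := by
      have h0 : ((g⁻¹ * g : (Vinf F) ≃ₗ[F] (Vinf F)) : (Vinf F) →ₗ[F] (Vinf F))
          = ((g⁻¹ : (Vinf F) ≃ₗ[F] (Vinf F)) : (Vinf F) →ₗ[F] (Vinf F)).comp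
            ((g : (Vinf F) →ₗ[F] (Vinf F))) := by
        ext x; rfl
      rw [← h0, inv_mul_cancel]
      ext x; rfl
    rw [h1, Submodule.map_id]

/-- The Borel σ-algebra of `B` for the topology of pointwise convergence: the σ-algebra
generated by the evaluations `g ↦ g(e_i)` (with the finite set `V` discrete). -/
noncomputable instance mB : MeasurableSpace ↥(Bgrp F) := by
  letI : MeasurableSpace (Vinf F) := ⊤
  exact MeasurableSpace.comap
    (fun g => fun i : ℕ => ((g : (Vinf F) ≃ₗ[F] (Vinf F)) (Finsupp.single i 1)))
    MeasurableSpace.pi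

/-- The increment `Sym(X)_{k+1} = dim(X ∩ V_{k+1}) - dim(X ∩ V_k)` of the symbol of a
subspace `X ⊆ V` (0-based indexing: `symInc X k` is the `(k+1)`-st, 1-based, entry). -/
noncomputable def symInc (X : Submodule F (Vinf F)) (k : ℕ) : ℕ :=
  Module.finrank F ↥(X ⊓ Vn F (k + 1)) - Module.finrank F ↥(X ⊓ Vn F k)

/-- The coordinate subspace `C(x) = span{e_i : x_i = 1}` of a 0–1 sequence `x`. -/
noncomputable def coordSpan (x : ℕ → Bool) : Submodule F (Vinf F) :=
  Submodule.span F ((fun i : ℕ => Finsupp.single i (1 : F)) '' {i : ℕ | x i = true})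

/-- The map `φ : {0,1}^ℕ × B → Gr(V)`, `(x, g) ↦ g·C(x)`. -/
noncomputable def phiMap (p : (ℕ → Bool) × ↥(Bgrp F)) : Submodule F (Vinf F) :=
  Submodule.map ((p.2 : (Vinf F) ≃ₗ[F] (Vinf F)) : (Vinf F) →ₗ[F] (Vinf F)) (coordSpan F p.1)

/-- The cylinder σ-algebra of the grassmannian `Gr(V)`, generated by the sets
`{X : X ∩ V_n = Y}`. -/
noncomputable instance mGr : MeasurableSpace (Submodule F (Vinf F)) :=
  MeasurableSpace.generateFrom
    {A | ∃ (n : ℕ) (Y : Submodule F (Vinf F)), A = {X | X ⊓ Vn F n = Y}}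

section helpers

set_option linter.unusedSectionVars false

variable {F}

/-- action on subspaces -/
noncomputable def gact (g : (Vinf F) ≃ₗ[F] (Vinf F)) (X : Submodule F (Vinf F)) : Submodule F (Vinf F) :=
  Submodule.map (g : (Vinf F) →ₗ[F] (Vinf F)) X

/-- position `i` is a leading position of `X` -/
def sy (X : Submodule F (Vinf F)) (i : ℕ) : Prop := ∃ v ∈ X, v ∈ Vn F (i + 1) ∧ v ∉ Vn F i

/-- sets determined at level n -/
def lvl (n : ℕ) (A : Set (Submodule F (Vinf F))) : Prop :=
  ∀ X X', X ⊓ Vn F n = X' ⊓ Vn F n → X ∈ A → X' ∈ A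

lemma mem_Vn {n : ℕ} {v : Vinf F} : v ∈ Vn F n ↔ ∀ i, n ≤ i → v i = 0 := Iff.rfl

lemma Vn_mono {n m : ℕ} (h : n ≤ m) : Vn F n ≤ Vn F m := fun _ hv i hi => hv i (h.trans hi)

lemma exists_mem_Vn (v : Vinf F) : ∃ n, v ∈ Vn F n := by
  refine ⟨v.support.sup id + 1, fun i hi => ?_⟩
  by_contra h
  have : i ≤ v.support.sup id := Finset.le_sup (f := id) (Finsupp.mem_support_iff.2 h)
  omega

lemma mem_succ_not {i : ℕ} {v : Vinf F} (hv : v ∈ Vn F (i + 1)) : v ∉ Vn F i ↔ v i ≠ 0 := by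
  rw [not_iff_comm, not_ne_iff]
  constructor
  · intro h j hj
    rcases hj.eq_or_lt with rfl | hj
    · exact h
    · exact hv j hj
  · intro h; exact h i le_rfl

lemma sy_iff {X : Submodule F (Vinf F)} {i : ℕ} :
    sy X i ↔ ∃ v ∈ X, v ∈ Vn F (i + 1) ∧ v i ≠ 0 := by
  unfold sy
  constructor
  · rintro ⟨v, h, h1, h2⟩; exact ⟨v, h, h1, (mem_succ_not h1).1 h2⟩
  · rintro ⟨v, h, h1, h2⟩; exact ⟨v, h, h1, (mem_succ_not h1).2 h2⟩

lemma mem_gact {g : (Vinf F) ≃ₗ[F] (Vinf F)} {X : Submodule F (Vinf F)} {v : Vinf F} :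
    v ∈ gact g X ↔ ∃ u ∈ X, g u = v := by
  unfold gact
  rw [Submodule.mem_map]
  rfl

lemma apply_mem_gact {g : (Vinf F) ≃ₗ[F] (Vinf F)} {X : Submodule F (Vinf F)} {v : Vinf F} :
    g v ∈ gact g X ↔ v ∈ X := by
  simp [gact]

lemma apply_mem_Vn {g : (Vinf F) ≃ₗ[F] (Vinf F)} {n : ℕ} (hg : gact g (Vn F n) = Vn F n)
    {v : Vinf F} : g v ∈ Vn F n ↔ v ∈ Vn F n := by
  conv_lhs => rw [← hg]
  exact apply_mem_gact

lemma gact_mul (g h : (Vinf F) ≃ₗ[F] (Vinf F)) (X : Submodule F (Vinf F)) :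
    gact (g * h) X = gact g (gact h X) := by
  ext v; simp [mem_gact]

lemma gact_one (X : Submodule F (Vinf F)) : gact (1 : (Vinf F) ≃ₗ[F] (Vinf F)) X = X := by
  ext v; simp [mem_gact]

lemma gact_inv (g : (Vinf F) ≃ₗ[F] (Vinf F)) (X : Submodule F (Vinf F)) :
    gact g⁻¹ (gact g X) = X := by
  rw [← gact_mul, inv_mul_cancel, gact_one]

lemma gact_inv' (g : (Vinf F) ≃ₗ[F] (Vinf F)) (X : Submodule F (Vinf F)) :
    gact g (gact g⁻¹ X) = X := by
  rw [← gact_mul, mul_inv_cancel, gact_one]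

lemma gact_inf {g : (Vinf F) ≃ₗ[F] (Vinf F)} {n : ℕ} (hg : gact g (Vn F n) = Vn F n)
    (X : Submodule F (Vinf F)) : gact g X ⊓ Vn F n = gact g (X ⊓ Vn F n) := by
  conv_lhs => rw [← hg]
  unfold gact
  rw [Submodule.map_inf _ g.injective]

lemma sy_gact {g : (Vinf F) ≃ₗ[F] (Vinf F)} {i : ℕ} (hg : gact g (Vn F i) = Vn F i)
    (hg' : gact g (Vn F (i + 1)) = Vn F (i + 1)) (X : Submodule F (Vinf F)) :
    sy (gact g X) i ↔ sy X i := by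
  unfold sy
  constructor
  · rintro ⟨v, hv, h1, h2⟩
    obtain ⟨u, hu, rfl⟩ := mem_gact.1 hv
    exact ⟨u, hu, (apply_mem_Vn hg').1 h1, fun h => h2 ((apply_mem_Vn hg).2 h)⟩
  · rintro ⟨v, hv, h1, h2⟩
    exact ⟨g v, apply_mem_gact.2 hv, (apply_mem_Vn hg').2 h1, fun h => h2 ((apply_mem_Vn hg).1 h)⟩

lemma sy_inf {X : Submodule F (Vinf F)} {i m : ℕ} (h : i < m) : sy (X ⊓ Vn F m) i ↔ sy X i := by
  unfold sy
  constructor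
  · rintro ⟨v, hv, h1⟩
    exact ⟨v, hv.1, h1⟩
  · rintro ⟨v, hv, h1⟩
    exact ⟨v, ⟨hv, Vn_mono h h1.1⟩, h1⟩

lemma sy_of_le {X : Submodule F (Vinf F)} {i m : ℕ} (hX : X ≤ Vn F m) (h : m ≤ i) : ¬ sy X i := by
  rintro ⟨v, hv, h1, h2⟩
  exact h2 (Vn_mono h (hX hv))

lemma mem_coordSpan {x : ℕ → Bool} {u : Vinf F} :
    u ∈ coordSpan F x ↔ ∀ i, x i = false → u i = 0 := by
  unfold coordSpan
  rw [← Finsupp.supported_eq_span_single, Finsupp.mem_supported']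
  simp

lemma single_mem_Vn {i n : ℕ} (h : i < n) (c : F) : (Finsupp.single i c : Vinf F) ∈ Vn F n := by
  intro j hj
  rw [Finsupp.single_apply, if_neg (by omega)]

lemma sy_coordSpan {x : ℕ → Bool} {i : ℕ} : sy (coordSpan F x) i ↔ x i = true := by
  rw [sy_iff]
  constructor
  · rintro ⟨v, hv, -, h⟩
    by_contra hx
    exact h (mem_coordSpan.1 hv i (by simpa using hx))
  · intro h
    refine ⟨Finsupp.single i 1, ?_, single_mem_Vn (by omega) _, by simp⟩
    rw [mem_coordSpan]
    intro j hj
    rw [Finsupp.single_apply, if_neg]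
    rintro rfl; simp_all

lemma B_gact {b : (Vinf F) ≃ₗ[F] (Vinf F)} (hb : b ∈ Bgrp F) (n : ℕ) :
    gact b (Vn F n) = Vn F n := hb n

lemma sy_B {b : (Vinf F) ≃ₗ[F] (Vinf F)} (hb : b ∈ Bgrp F) (X : Submodule F (Vinf F)) (i : ℕ) :
    sy (gact b X) i ↔ sy X i := sy_gact (hb i) (hb _) X

/-- unitriangular automorphism -/
lemma exists_unitri (v : ℕ → Vinf F) (hv : ∀ i, v i ∈ Vn F (i + 1)) (hv1 : ∀ i, v i i = 1) :
    ∃ b ∈ Bgrp F, ∀ i, b (Finsupp.single i 1) = v i := by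
  let T : Vinf F →ₗ[F] Vinf F := Finsupp.linearCombination F v
  have hT : ∀ i, T (Finsupp.single i 1) = v i := fun i => by simp [T]
  have hmaps : ∀ n u, u ∈ Vn F n → T u ∈ Vn F n := by
    intro n u hu
    simp only [T, Finsupp.linearCombination_apply, Finsupp.sum]
    refine Submodule.sum_mem _ fun i hi => Submodule.smul_mem _ _ (Vn_mono ?_ (hv i))
    by_contra h
    exact (Finsupp.mem_support_iff.1 hi) (hu i (by omega))
  have hdec : ∀ n u, u ∈ Vn F (n + 1) → u - u n • Finsupp.single n 1 ∈ Vn F n := by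
    intro n u hu i hi
    rcases hi.eq_or_lt with rfl | hi
    · simp
    · simp [hu i hi, hi.ne]
  have hdec' : ∀ n u, u ∈ Vn F (n + 1) → u - u n • v n ∈ Vn F n := by
    intro n u hu i hi
    rcases hi.eq_or_lt with rfl | hi
    · simp [hv1]
    · simp [hu i hi, hv n i hi]
  have hlead : ∀ n u, u ∈ Vn F (n + 1) → T u n = u n := by
    intro n u hu
    have h1 := hmaps n _ (hdec n u hu) n le_rfl
    rw [map_sub, map_smul, hT] at h1
    simp only [Finsupp.sub_apply, Finsupp.smul_apply, hv1, smul_eq_mul, mul_one] at h1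
    exact sub_eq_zero.1 h1
  have hinj0 : ∀ n u, u ∈ Vn F n → T u = 0 → u = 0 := by
    intro n
    induction n with
    | zero => intro u hu _; ext i; exact hu i (by omega)
    | succ n ih =>
      intro u hu h0
      refine ih u ?_ h0
      have := hlead n u hu
      rw [h0] at this
      by_contra hh
      exact (mem_succ_not hu).1 hh this.symm
  have hsurj0 : ∀ n w, w ∈ Vn F n → ∃ u ∈ Vn F n, T u = w := by
    intro n
    induction n with
    | zero =>
      intro u hu
      refine ⟨0, Submodule.zero_mem _, ?_⟩
      rw [map_zero]
      ext i; exact (hu i (by omega)).symm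
    | succ n ih =>
      intro w hw
      obtain ⟨u, hu, hu'⟩ := ih _ (hdec' n w hw)
      refine ⟨u + w n • Finsupp.single n 1, Submodule.add_mem _ (Vn_mono (by omega) hu)
        (Submodule.smul_mem _ _ (single_mem_Vn (by omega) _)), ?_⟩
      rw [map_add, map_smul, hT, hu']; simp
  have hbij : Function.Bijective T := by
    constructor
    · rw [injective_iff_map_eq_zero]
      intro u hu
      obtain ⟨n, hn⟩ := exists_mem_Vn u
      exact hinj0 n u hn hu
    · intro w
      obtain ⟨n, hn⟩ := exists_mem_Vn w
      obtain ⟨u, -, hu⟩ := hsurj0 n w hn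
      exact ⟨u, hu⟩
  refine ⟨LinearEquiv.ofBijective T hbij, ?_, fun i => by simpa using hT i⟩
  intro n
  ext w
  rw [Submodule.mem_map]
  constructor
  · rintro ⟨u, hu, rfl⟩; exact hmaps n u hu
  · intro hw; obtain ⟨u, hu, h⟩ := hsurj0 n w hw; exact ⟨u, hu, h⟩

open Classical in
lemma exists_B_coord (X : Submodule F (Vinf F)) :
    ∃ b ∈ Bgrp F, X = gact b (coordSpan F fun i => decide (sy X i)) := by
  have hex : ∀ i, ∃ v : Vinf F, v ∈ Vn F (i + 1) ∧ v i = 1 ∧ (sy X i → v ∈ X) := by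
    intro i
    by_cases h : sy X i
    · obtain ⟨v, hv, h1, h2⟩ := sy_iff.1 h
      exact ⟨(v i)⁻¹ • v, Submodule.smul_mem _ _ h1, by simp [h2], fun _ => Submodule.smul_mem _ _ hv⟩
    · exact ⟨Finsupp.single i 1, single_mem_Vn (by omega) _, by simp, fun h' => absurd h' h⟩
  choose v hv hv1 hvX using hex
  obtain ⟨b, hb, hbv⟩ := exists_unitri v hv hv1
  refine ⟨b, hb, le_antisymm ?_ ?_⟩
  · have key : ∀ n w, w ∈ Vn F n → w ∈ X → w ∈ gact b (coordSpan F fun i => decide (sy X i)) := by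
      intro n
      induction n with
      | zero =>
        intro w hw _
        have : w = 0 := by ext i; exact hw i (by omega)
        rw [this]; exact Submodule.zero_mem _
      | succ n ih =>
        intro w hw hwX
        by_cases h : sy X n
        · have h1 : w - w n • v n ∈ Vn F n := by
            intro i hi
            rcases hi.eq_or_lt with rfl | hi
            · simp [hv1]
            · simp [hw i hi, hv n i hi]
          have h2 := ih _ h1 (Submodule.sub_mem _ hwX (Submodule.smul_mem _ _ (hvX n h)))
          have h3 : v n ∈ gact b (coordSpan F fun i => decide (sy X i)) := by
            rw [← hbv, apply_mem_gact]
            exact Submodule.subset_span ⟨n, by simpa using h, rfl⟩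
          have := Submodule.add_mem _ h2 (Submodule.smul_mem _ (w n) h3)
          simpa using this
        · refine ih w ?_ hwX
          by_contra hh
          exact h ⟨w, hwX, hw, hh⟩
    intro w hw
    obtain ⟨n, hn⟩ := exists_mem_Vn w
    exact key n w hn hw
  · unfold gact coordSpan
    rw [Submodule.map_span, Submodule.span_le]
    rintro _ ⟨_, ⟨i, hi, rfl⟩, rfl⟩
    have : sy X i := by simpa using hi
    simpa [hbv] using hvX i this

lemma exists_B_of_sy (X Y : Submodule F (Vinf F)) (h : ∀ i, sy X i ↔ sy Y i) :
    ∃ b ∈ Bgrp F, gact b X = Y := by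
  classical
  obtain ⟨b, hb, hX⟩ := exists_B_coord X
  obtain ⟨c, hc, hY⟩ := exists_B_coord Y
  refine ⟨c * b⁻¹, mul_mem hc (inv_mem hb), ?_⟩
  have e : (fun i => decide (sy X i)) = fun i => decide (sy Y i) := by
    funext i; simp [h i]
  rw [e] at hX
  rw [gact_mul, hX, gact_inv]
  exact hY.symm

lemma phiMap_eq (p : (ℕ → Bool) × ↥(Bgrp F)) :
    phiMap F p = gact (p.2 : (Vinf F) ≃ₗ[F] (Vinf F)) (coordSpan F p.1) := rfl

lemma sy_phiMap (p : (ℕ → Bool) × ↥(Bgrp F)) (i : ℕ) : sy (phiMap F p) i ↔ p.1 i = true := by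
  rw [phiMap_eq, sy_B p.2.2, sy_coordSpan]

lemma phiMap_level_le (n : ℕ) (p p' : (ℕ → Bool) × ↥(Bgrp F)) (h1 : ∀ i < n, p.1 i = p'.1 i)
    (h2 : ∀ i < n, (p.2 : (Vinf F) ≃ₗ[F] (Vinf F)) (Finsupp.single i 1)
      = (p'.2 : (Vinf F) ≃ₗ[F] (Vinf F)) (Finsupp.single i 1)) :
    phiMap F p ⊓ Vn F n ≤ phiMap F p' ⊓ Vn F n := by
  rintro v ⟨hv, hvn⟩
  refine ⟨?_, hvn⟩
  obtain ⟨u, hu, rfl⟩ := mem_gact.1 hv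
  have hun : u ∈ Vn F n := (apply_mem_Vn (p.2.2 n)).1 hvn
  refine mem_gact.2 ⟨u, ?_, ?_⟩
  · rw [mem_coordSpan] at hu ⊢
    intro i hi
    by_cases hin : i < n
    · exact hu i (by rw [h1 i hin, hi])
    · exact hun i (by omega)
  · have hs : u = u.sum fun i c => c • Finsupp.single i (1 : F) := by
      conv_lhs => rw [← Finsupp.sum_single u]
      simp
    rw [hs, Finsupp.sum, map_sum, map_sum]
    refine Finset.sum_congr rfl fun i hi => ?_
    rw [map_smul, map_smul, h2 i]
    by_contra h
    exact (Finsupp.mem_support_iff.1 hi) (hun i (by omega))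

lemma phiMap_level (n : ℕ) (p p' : (ℕ → Bool) × ↥(Bgrp F)) (h1 : ∀ i < n, p.1 i = p'.1 i)
    (h2 : ∀ i < n, (p.2 : (Vinf F) ≃ₗ[F] (Vinf F)) (Finsupp.single i 1)
      = (p'.2 : (Vinf F) ≃ₗ[F] (Vinf F)) (Finsupp.single i 1)) :
    phiMap F p ⊓ Vn F n = phiMap F p' ⊓ Vn F n :=
  le_antisymm (phiMap_level_le n p p' h1 h2)
    (phiMap_level_le n p' p (fun i hi => (h1 i hi).symm) (fun i hi => (h2 i hi).symm))

/-- the transvection -/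
noncomputable def ut (n : ℕ) (c : F) : (Vinf F) ≃ₗ[F] (Vinf F) where
  toFun v := v + Finsupp.single n (c * v (n + 1))
  invFun v := v + Finsupp.single n (-c * v (n + 1))
  map_add' v w := by
    ext i
    simp only [Finsupp.add_apply, Finsupp.single_apply]
    split_ifs <;> ring
  map_smul' a v := by
    ext i
    simp only [Finsupp.add_apply, Finsupp.smul_apply, Finsupp.single_apply, RingHom.id_apply,
      smul_eq_mul]
    split_ifs <;> ring
  left_inv v := by
    ext i
    simp only [Finsupp.add_apply, Finsupp.single_apply]
    split_ifs <;> first | omega | ring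
  right_inv v := by
    ext i
    simp only [Finsupp.add_apply, Finsupp.single_apply]
    split_ifs <;> first | omega | ring

/-- the transposition -/
noncomputable def sw (n : ℕ) : (Vinf F) ≃ₗ[F] (Vinf F) :=
  Finsupp.domLCongr (Equiv.swap n (n + 1))

lemma ut_apply (n : ℕ) (c : F) (v : Vinf F) (i : ℕ) :
    ut n c v i = v i + if n = i then c * v (n + 1) else 0 := by
  have : ut n c v = v + Finsupp.single n (c * v (n + 1)) := rfl
  rw [this, Finsupp.add_apply, Finsupp.single_apply]

lemma sw_apply (n : ℕ) (v : Vinf F) (i : ℕ) : sw n v i = v (Equiv.swap n (n + 1) i) := by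
  simp [sw, Finsupp.domLCongr_apply, Finsupp.domCongr_apply]

lemma sw_sw (n : ℕ) (v : Vinf F) : sw n (sw n v) = v := by
  ext i; simp [sw_apply]

lemma gact_sw_sw (n : ℕ) (X : Submodule F (Vinf F)) : gact (sw n) (gact (sw n) X) = X := by
  ext v
  constructor
  · intro h
    obtain ⟨u, hu, rfl⟩ := mem_gact.1 h
    obtain ⟨u, hu, rfl⟩ := mem_gact.1 hu
    rwa [sw_sw]
  · intro h
    rw [← sw_sw n v, apply_mem_gact, apply_mem_gact]; exact h

lemma gact_eq_of_iff {g : (Vinf F) ≃ₗ[F] (Vinf F)} {X : Submodule F (Vinf F)}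
    (h : ∀ v, g v ∈ X ↔ v ∈ X) : gact g X = X := by
  ext v
  obtain ⟨u, rfl⟩ := g.surjective v
  rw [apply_mem_gact, h]

lemma ut_Vn (n : ℕ) (c : F) (k : ℕ) : gact (ut n c) (Vn F k) = Vn F k := by
  refine gact_eq_of_iff fun v => ?_
  simp only [mem_Vn, ut_apply]
  constructor
  · intro h i hi
    have h1 := h i hi
    split_ifs at h1 with hh
    · subst hh
      have h2 := h (n + 1) (by omega)
      simp only [Nat.left_eq_add, one_ne_zero, if_false, add_zero] at h2
      simpa [h2] using h1
    · simpa using h1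
  · intro h i hi
    split_ifs with hh
    · subst hh; rw [h n hi, h (n + 1) (by omega)]; simp
    · simp [h i hi]

lemma ut_mem_B (n : ℕ) (c : F) : ut n c ∈ Bgrp F := fun k => ut_Vn n c k

lemma swap_ge {n k i : ℕ} (hk : k ≠ n + 1) (hi : k ≤ i) : k ≤ Equiv.swap n (n + 1) i := by
  rw [Equiv.swap_apply_def]; split_ifs <;> omega

lemma sw_Vn (n k : ℕ) (hk : k ≠ n + 1) : gact (sw n) (Vn F k) = Vn F k := by
  refine gact_eq_of_iff fun v => ?_
  simp only [mem_Vn, sw_apply]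
  constructor
  · intro h i hi
    have := h _ (swap_ge hk hi)
    simpa using this
  · intro h i hi
    exact h _ (swap_ge hk hi)

lemma sw_mem_GLB (n : ℕ) : sw n ∈ GLBgrp F := ⟨n + 2, fun k hk => sw_Vn n k (by omega)⟩

lemma B_le_GLB {b : (Vinf F) ≃ₗ[F] (Vinf F)} (hb : b ∈ Bgrp F) : b ∈ GLBgrp F :=
  ⟨0, fun k _ => hb k⟩

lemma sw_inf (n : ℕ) (X : Submodule F (Vinf F)) : gact (sw n) X ⊓ Vn F n = X ⊓ Vn F n := by
  rw [gact_inf (sw_Vn n n (by omega))]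
  have key : ∀ v ∈ Vn F n, sw n v = v := by
    intro v hv
    ext i
    rw [sw_apply, Equiv.swap_apply_def]
    split_ifs with h1 h2
    · rw [hv (n + 1) (by omega), hv i (by omega)]
    · rw [hv n le_rfl, hv i (by omega)]
    · rfl
  ext v
  constructor
  · intro h
    obtain ⟨u, hu, rfl⟩ := mem_gact.1 h
    rwa [key u hu.2]
  · intro h
    exact mem_gact.2 ⟨v, h, key v h.2⟩

lemma sy_h_other (n : ℕ) (c : F) (X : Submodule F (Vinf F)) (i : ℕ) (h1 : i ≠ n) (h2 : i ≠ n + 1) :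
    sy (gact (sw n) (gact (ut n c) X)) i ↔ sy X i := by
  rw [sy_gact (sw_Vn n i h2) (sw_Vn n (i + 1) (by omega)), sy_B (ut_mem_B n c)]

lemma swut_apply_n (n : ℕ) (c : F) (v : Vinf F) : sw n (ut n c v) n = v (n + 1) := by
  simp [sw_apply, ut_apply]

lemma swut_apply_n1 (n : ℕ) (c : F) (v : Vinf F) :
    sw n (ut n c v) (n + 1) = v n + c * v (n + 1) := by
  simp [sw_apply, ut_apply]

lemma swut_mem (n : ℕ) (c : F) (v : Vinf F) :
    sw n (ut n c v) ∈ Vn F (n + 2) ↔ v ∈ Vn F (n + 2) := by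
  rw [apply_mem_Vn (sw_Vn n (n + 2) (by omega)), apply_mem_Vn (ut_Vn n c _)]

lemma mem_succ_iff {i : ℕ} {v : Vinf F} : v ∈ Vn F i ↔ v ∈ Vn F (i + 1) ∧ v i = 0 := by
  constructor
  · intro h; exact ⟨Vn_mono (by omega) h, h i le_rfl⟩
  · rintro ⟨h, h'⟩
    by_contra hh
    exact (mem_succ_not h).1 hh h'

lemma sy_h_n (n : ℕ) (c : F) (X : Submodule F (Vinf F)) :
    sy (gact (sw n) (gact (ut n c) X)) n ↔
      ∃ x ∈ X, x ∈ Vn F (n + 2) ∧ x (n + 1) ≠ 0 ∧ x n + c * x (n + 1) = 0 := by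
  rw [sy_iff]
  constructor
  · rintro ⟨v, hv, h1, h2⟩
    obtain ⟨u', hu', rfl⟩ := mem_gact.1 hv
    obtain ⟨u, hu, rfl⟩ := mem_gact.1 hu'
    rw [mem_succ_iff, swut_apply_n1, swut_mem] at h1
    rw [swut_apply_n] at h2
    exact ⟨u, hu, h1.1, h2, h1.2⟩
  · rintro ⟨u, hu, h1, h2, h3⟩
    refine ⟨sw n (ut n c u), by rwa [apply_mem_gact, apply_mem_gact], ?_, by rwa [swut_apply_n]⟩
    rw [mem_succ_iff, swut_apply_n1, swut_mem]
    exact ⟨h1, h3⟩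

lemma sy_h_n1 (n : ℕ) (c : F) (X : Submodule F (Vinf F)) :
    sy (gact (sw n) (gact (ut n c) X)) (n + 1) ↔
      ∃ x ∈ X, x ∈ Vn F (n + 2) ∧ x n + c * x (n + 1) ≠ 0 := by
  rw [sy_iff]
  constructor
  · rintro ⟨v, hv, h1, h2⟩
    obtain ⟨u', hu', rfl⟩ := mem_gact.1 hv
    obtain ⟨u, hu, rfl⟩ := mem_gact.1 hu'
    rw [swut_mem] at h1
    rw [swut_apply_n1] at h2
    exact ⟨u, hu, h1, h2⟩
  · rintro ⟨u, hu, h1, h2⟩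
    exact ⟨sw n (ut n c u), by rwa [apply_mem_gact, apply_mem_gact], by rwa [swut_mem],
      by rwa [swut_apply_n1]⟩

lemma h_exists (n : ℕ) (X : Submodule F (Vinf F)) (h0 : ¬ sy X n) (h1 : sy X (n + 1)) :
    ∃ c : F, sy (gact (sw n) (gact (ut n c) X)) n ∧
      ¬ sy (gact (sw n) (gact (ut n c) X)) (n + 1) := by
  obtain ⟨x, hx, hxV, hx0⟩ := sy_iff.1 h1
  refine ⟨-(x n / x (n + 1)), ?_, ?_⟩
  · rw [sy_h_n]
    exact ⟨x, hx, hxV, hx0, by field_simp; ring⟩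
  · rw [sy_h_n1]
    rintro ⟨y, hy, hyV, hy0⟩
    apply h0
    rw [sy_iff]
    refine ⟨y - (y (n + 1) / x (n + 1)) • x, Submodule.sub_mem _ hy (Submodule.smul_mem _ _ hx),
      ?_, ?_⟩
    · rw [mem_succ_iff]
      refine ⟨Submodule.sub_mem _ hyV (Submodule.smul_mem _ _ hxV), ?_⟩
      simp [hx0]
    · simp only [Finsupp.sub_apply, Finsupp.smul_apply, smul_eq_mul]
      convert hy0 using 1
      field_simp
      ring

lemma h_back (n : ℕ) (c : F) (X : Submodule F (Vinf F))
    (h0 : sy (gact (sw n) (gact (ut n c) X)) n)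
    (h1 : ¬ sy (gact (sw n) (gact (ut n c) X)) (n + 1)) : ¬ sy X n ∧ sy X (n + 1) := by
  rw [sy_h_n] at h0
  rw [sy_h_n1] at h1
  obtain ⟨x, hx, hxV, hx0, hxc⟩ := h0
  refine ⟨fun h => ?_, sy_iff.2 ⟨x, hx, hxV, hx0⟩⟩
  obtain ⟨y, hy, hyV, hy0⟩ := sy_iff.1 h
  refine h1 ⟨y, hy, Vn_mono (by omega) hyV, ?_⟩
  rw [hyV (n + 1) le_rfl]; simpa using hy0

lemma h_unique (n : ℕ) (c d : F) (X : Submodule F (Vinf F))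
    (h0 : sy (gact (sw n) (gact (ut n c) X)) n)
    (h1 : ¬ sy (gact (sw n) (gact (ut n d) X)) (n + 1)) : c = d := by
  rw [sy_h_n] at h0
  rw [sy_h_n1] at h1
  obtain ⟨x, hx, hxV, hx0, hxc⟩ := h0
  have h2 : x n + d * x (n + 1) = 0 := by
    by_contra hh; exact h1 ⟨x, hx, hxV, hh⟩
  have : (c - d) * x (n + 1) = 0 := by linear_combination hxc - h2
  rcases mul_eq_zero.1 this with h | h
  · exact sub_eq_zero.1 h
  · exact absurd h hx0

lemma ut_zero (n : ℕ) (X : Submodule F (Vinf F)) : gact (ut n (0 : F)) X = X :=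
  gact_eq_of_iff fun v => by
    have : ut n (0 : F) v = v := by ext i; simp [ut_apply]
    rw [this]

/-- swapped pattern -/
lemma sy_h_swap (n : ℕ) (c : F) (X : Submodule F (Vinf F))
    (h0 : sy (gact (sw n) (gact (ut n c) X)) n)
    (h1 : ¬ sy (gact (sw n) (gact (ut n c) X)) (n + 1)) (i : ℕ) :
    sy X i ↔ sy (gact (sw n) (gact (ut n c) X)) (Equiv.swap n (n + 1) i) := by
  have h2 := h_back n c X h0 h1
  rcases eq_or_ne i n with rfl | hi
  · rw [Equiv.swap_apply_left]; exact iff_of_false h2.1 h1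
  rcases eq_or_ne i (n + 1) with rfl | hi'
  · rw [Equiv.swap_apply_right]; exact iff_of_true h2.2 h0
  rw [Equiv.swap_apply_of_ne_of_ne hi hi', sy_h_other n c X i hi hi']

/-! measurability -/

lemma finite_le_Vn (n : ℕ) : {Y : Submodule F (Vinf F) | Y ≤ Vn F n}.Finite := by
  have hfin : (Vn F n : Set (Vinf F)).Finite := by
    have : Set.InjOn (fun (v : Vinf F) (i : Fin n) => v i) (Vn F n : Set (Vinf F)) := by
      intro v hv w hw h
      ext i
      by_cases hi : i < n
      · exact congrFun h ⟨i, hi⟩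
      · rw [hv i (by omega), hw i (by omega)]
    exact Set.Finite.of_finite_image (Set.toFinite _) this
  refine Set.Finite.of_finite_image (f := fun Y : Submodule F (Vinf F) => (Y : Set (Vinf F))) ?_
    (SetLike.coe_injective.injOn)
  refine hfin.finite_subsets.subset ?_
  rintro _ ⟨Y, hY, rfl⟩
  exact hY

lemma measurableSet_cyl (n : ℕ) (Y : Submodule F (Vinf F)) :
    MeasurableSet {X : Submodule F (Vinf F) | X ⊓ Vn F n = Y} :=
  MeasurableSpace.measurableSet_generateFrom ⟨n, Y, rfl⟩

lemma lvl_eq_biUnion {n : ℕ} {A : Set (Submodule F (Vinf F))} (hA : lvl n A) :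
    A = ⋃ Y ∈ {Y : Submodule F (Vinf F) | Y ≤ Vn F n ∧ Y ∈ A}, {X | X ⊓ Vn F n = Y} := by
  ext X
  simp only [Set.mem_ofPred_eq, Set.mem_iUnion, exists_prop, exists_eq_right']
  have e : X ⊓ Vn F n = (X ⊓ Vn F n) ⊓ Vn F n := by rw [inf_assoc, inf_idem]
  constructor
  · intro h; exact ⟨inf_le_right, hA X _ e h⟩
  · rintro ⟨-, h⟩; exact hA _ X e.symm h

lemma lvl_measurable {n : ℕ} {A : Set (Submodule F (Vinf F))} (hA : lvl n A) : MeasurableSet A := by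
  rw [lvl_eq_biUnion hA]
  exact Set.Finite.measurableSet_biUnion ((finite_le_Vn n).subset fun Y hY => hY.1)
    fun Y _ => measurableSet_cyl n Y

lemma lvl_mono {n m : ℕ} (h : n ≤ m) {A : Set (Submodule F (Vinf F))} (hA : lvl n A) : lvl m A := by
  intro X X' hX
  refine hA X X' ?_
  have e : ∀ Z : Submodule F (Vinf F), Z ⊓ Vn F n = (Z ⊓ Vn F m) ⊓ Vn F n := fun Z => by
    rw [inf_assoc, inf_eq_right.2 (Vn_mono h)]
  rw [e X, e X', hX]

lemma lvl_cyl (n : ℕ) (Y : Submodule F (Vinf F)) :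
    lvl n {X : Submodule F (Vinf F) | X ⊓ Vn F n = Y} := by
  intro X X' h hX
  exact h.symm.trans hX

lemma lvl_sy (n i : ℕ) (h : i < n) : lvl n {X : Submodule F (Vinf F) | sy X i} := by
  intro X X' e hX
  have : sy X i := hX
  rw [← sy_inf h, e, sy_inf h] at this
  exact this

lemma lvl_compl {n : ℕ} {A : Set (Submodule F (Vinf F))} (hA : lvl n A) : lvl n Aᶜ :=
  fun X X' e h h' => h (hA X' X e.symm h')

lemma lvl_inter {n : ℕ} {A C : Set (Submodule F (Vinf F))} (hA : lvl n A) (hC : lvl n C) :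
    lvl n (A ∩ C) :=
  fun X X' e h => ⟨hA X X' e h.1, hC X X' e h.2⟩

lemma lvl_union {n : ℕ} {A C : Set (Submodule F (Vinf F))} (hA : lvl n A) (hC : lvl n C) :
    lvl n (A ∪ C) :=
  fun X X' e h => h.imp (hA X X' e) (hC X X' e)

lemma lvl_gact {g : (Vinf F) ≃ₗ[F] (Vinf F)} {n : ℕ} (hg : gact g (Vn F n) = Vn F n)
    {A : Set (Submodule F (Vinf F))} (hA : lvl n A) : lvl n (gact g ⁻¹' A) := by
  intro X X' e h
  refine hA (gact g X) (gact g X') ?_ h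
  rw [gact_inf hg, gact_inf hg, e]

lemma measurable_gact {g : (Vinf F) ≃ₗ[F] (Vinf F)} (hg : g ∈ GLBgrp F) :
    Measurable (gact g) := by
  refine measurable_generateFrom ?_
  rintro _ ⟨n, Y, rfl⟩
  obtain ⟨N, hN⟩ := hg
  exact lvl_measurable (lvl_gact (hN (max n N) (le_max_right _ _))
    (lvl_mono (le_max_left _ _) (lvl_cyl n Y)))

/-- The algebra of sets determined at a finite level. -/
def alg (F : Type) [Field F] : Set (Set (Submodule F (Vinf F))) := {A | ∃ n, lvl n A}

lemma alg_isSetAlgebra : IsSetAlgebra (alg F) where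
  empty_mem := ⟨0, fun _ _ _ h => h⟩
  compl_mem := fun _ ⟨n, h⟩ => ⟨n, lvl_compl h⟩
  union_mem := fun _ _ ⟨n, h⟩ ⟨m, h'⟩ =>
    ⟨max n m, lvl_union (lvl_mono (le_max_left _ _) h) (lvl_mono (le_max_right _ _) h')⟩

lemma alg_generate : mGr F = MeasurableSpace.generateFrom (alg F) := by
  apply le_antisymm
  · refine MeasurableSpace.generateFrom_mono ?_
    rintro _ ⟨n, Y, rfl⟩
    exact ⟨n, lvl_cyl n Y⟩
  · refine MeasurableSpace.generateFrom_le ?_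
    rintro A ⟨n, h⟩
    exact lvl_measurable h

lemma meas_of_factor {Ω K : Type*} [MeasurableSpace Ω] [Countable K] (f : Ω → K)
    (hf : ∀ k, MeasurableSet (f ⁻¹' {k})) (S : Set Ω) (hS : ∀ x y, f x = f y → x ∈ S → y ∈ S) :
    MeasurableSet S := by
  have : S = ⋃ k ∈ f '' S, f ⁻¹' {k} := by
    ext y
    simp only [Set.mem_iUnion, Set.mem_preimage, Set.mem_singleton_iff, exists_prop]
    constructor
    · intro h; exact ⟨f y, ⟨y, h, rfl⟩, rfl⟩
    · rintro ⟨_, ⟨x, hx, rfl⟩, h⟩; exact hS x y h.symm hx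
  rw [this]
  exact MeasurableSet.biUnion (Set.to_countable _) fun k _ => hf k

lemma measurableSet_eval (i : ℕ) (S : Set (Vinf F)) :
    MeasurableSet {b : ↥(Bgrp F) | (b : (Vinf F) ≃ₗ[F] (Vinf F)) (Finsupp.single i 1) ∈ S} := by
  let _ : MeasurableSpace (Vinf F) := ⊤
  refine ⟨{f : ℕ → Vinf F | f i ∈ S}, ?_, rfl⟩
  exact measurable_pi_apply i (MeasurableSpace.measurableSet_top)

lemma measurable_mulB (b : ↥(Bgrp F)) : Measurable (fun x : ↥(Bgrp F) => b * x) := by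
  let _ : MeasurableSpace (Vinf F) := ⊤
  rw [show mB F = MeasurableSpace.comap
    (fun g : ↥(Bgrp F) => fun i : ℕ => ((g : (Vinf F) ≃ₗ[F] (Vinf F)) (Finsupp.single i 1)))
    MeasurableSpace.pi from rfl]
  rw [measurable_comap_iff, measurable_pi_iff]
  intro i S _
  exact measurableSet_eval i {v | (b : (Vinf F) ≃ₗ[F] (Vinf F)) v ∈ S}

lemma measurable_phiMap : Measurable (phiMap F) := by
  refine measurable_generateFrom ?_
  rintro _ ⟨n, Y, rfl⟩
  refine meas_of_factor (K := (Fin n → Bool) × (Fin n → Vinf F))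
    (fun p => (fun i => p.1 i, fun i => (p.2 : (Vinf F) ≃ₗ[F] (Vinf F)) (Finsupp.single (i : ℕ) 1)))
    ?_ _ ?_
  · rintro ⟨k1, k2⟩
    have : MeasurableSet ({x : ℕ → Bool | ∀ i : Fin n, x i = k1 i} ×ˢ
        {b : ↥(Bgrp F) | ∀ i : Fin n, (b : (Vinf F) ≃ₗ[F] (Vinf F)) (Finsupp.single (i : ℕ) 1)
          = k2 i}) := by
      refine MeasurableSet.prod ?_ ?_
      · rw [Set.ofPred_forall]
        exact MeasurableSet.iInter fun i => by
          have h := measurable_pi_apply (X := fun _ : ℕ => Bool) (i : ℕ)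
            (MeasurableSet.singleton (k1 i))
          exact h
      · rw [Set.ofPred_forall]
        exact MeasurableSet.iInter fun i => measurableSet_eval (i : ℕ) {k2 i}
    convert this using 1
    ext p
    simp [funext_iff]
  · intro p p' h hp
    simp only [Prod.mk.injEq, funext_iff] at h
    have := phiMap_level n p p' (fun i hi => h.1 ⟨i, hi⟩) (fun i hi => h.2 ⟨i, hi⟩)
    exact this.symm.trans hp

lemma eta_B (μBer : Measure (ℕ → Bool)) [IsProbabilityMeasure μBer]
    (μB : Measure ↥(Bgrp F)) [IsProbabilityMeasure μB]
    (hμBinv : ∀ (b : ↥(Bgrp F)) (S : Set ↥(Bgrp F)), MeasurableSet S →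
      μB ((fun x => b * x) ⁻¹' S) = μB S)
    (η : Measure (Submodule F (Vinf F)))
    (hη : ∀ A : Set (Submodule F (Vinf F)), MeasurableSet A →
      η A = (μBer.prod μB) (phiMap F ⁻¹' A))
    (b : (Vinf F) ≃ₗ[F] (Vinf F)) (hb : b ∈ Bgrp F) (A : Set (Submodule F (Vinf F)))
    (hA : MeasurableSet A) : η (gact b ⁻¹' A) = η A := by
  rw [hη _ (measurable_gact (B_le_GLB hb) hA), hη A hA]
  have h1 : MeasurePreserving (fun x : ↥(Bgrp F) => (⟨b, hb⟩ : ↥(Bgrp F)) * x) μB μB := by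
    refine ⟨measurable_mulB _, ?_⟩
    ext S hS
    rw [Measure.map_apply (measurable_mulB _) hS, hμBinv _ S hS]
  have h2 := (MeasurePreserving.id μBer).prod h1
  rw [← h2.measure_preimage (measurable_phiMap hA).nullMeasurableSet]
  congr 1
  ext p
  simp only [Set.mem_preimage, phiMap_eq, Prod.map_fst, Prod.map_snd, id, Subgroup.coe_mul, gact_mul]

lemma eta_pattern (t₁ t₂ : ℝ) (μBer : Measure (ℕ → Bool)) [IsProbabilityMeasure μBer]
    (hBer : ∀ (n : ℕ) (c : Fin n → Bool),
      μBer {ω | ∀ i : Fin n, ω (i : ℕ) = c i}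
        = ∏ i : Fin n, ENNReal.ofReal (if c i then t₁ else t₂))
    (μB : Measure ↥(Bgrp F)) [IsProbabilityMeasure μB]
    (η : Measure (Submodule F (Vinf F)))
    (hη : ∀ A : Set (Submodule F (Vinf F)), MeasurableSet A →
      η A = (μBer.prod μB) (phiMap F ⁻¹' A)) (m : ℕ) (c : Fin m → Bool) :
    η {X | ∀ i : Fin m, sy X i ↔ c i = true} =
      ∏ i : Fin m, ENNReal.ofReal (if c i then t₁ else t₂) := by
  have hl : lvl m {X : Submodule F (Vinf F) | ∀ i : Fin m, sy X i ↔ c i = true} := by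
    intro X X' e h i
    rw [← h i, ← sy_inf i.2, ← e, sy_inf i.2]
  rw [hη _ (lvl_measurable hl), ← hBer]
  have : phiMap F ⁻¹' {X | ∀ i : Fin m, sy X i ↔ c i = true}
      = {ω : ℕ → Bool | ∀ i : Fin m, ω (i : ℕ) = c i} ×ˢ (Set.univ : Set ↥(Bgrp F)) := by
    ext p
    simp only [Set.mem_preimage, Set.mem_ofPred_eq, sy_phiMap, Set.mem_prod, Set.mem_univ, and_true,
      Bool.coe_iff_coe]
  rw [this, Measure.prod_prod, measure_univ, mul_one]

lemma eta_cyl_eq (η : Measure (Submodule F (Vinf F)))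
    (hinv : ∀ b ∈ Bgrp F, ∀ A : Set (Submodule F (Vinf F)), MeasurableSet A →
      η (gact b ⁻¹' A) = η A) (m : ℕ) (Y Z : Submodule F (Vinf F))
    (h : ∀ i, sy Y i ↔ sy Z i) :
    η {X | X ⊓ Vn F m = Y} = η {X | X ⊓ Vn F m = Z} := by
  obtain ⟨b, hb, rfl⟩ := exists_B_of_sy Y Z h
  rw [← hinv b hb {X | X ⊓ Vn F m = gact b Y} (measurableSet_cyl m _)]
  congr 1
  ext X
  simp only [Set.mem_preimage, Set.mem_ofPred_eq]
  rw [gact_inf (hb m)]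
  exact ⟨fun h => by rw [h], fun h => by rw [← gact_inv b (X ⊓ _), h, gact_inv]⟩

lemma sw_cyl (n m : ℕ) (hm : n + 2 ≤ m) (Y : Submodule F (Vinf F)) :
    gact (sw n) ⁻¹' {X | X ⊓ Vn F m = Y} = {X | X ⊓ Vn F m = gact (sw n) Y} := by
  ext X
  simp only [Set.mem_preimage, Set.mem_ofPred_eq]
  rw [gact_inf (sw_Vn n m (by omega))]
  constructor
  · rintro rfl; rw [gact_sw_sw]
  · intro h; rw [h, gact_sw_sw]

lemma disj_cyl (m : ℕ) (S : Set (Submodule F (Vinf F))) :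
    S.PairwiseDisjoint (fun Y => {X : Submodule F (Vinf F) | X ⊓ Vn F m = Y}) := by
  intro Y _ Z _ h
  rw [Function.onFun, Set.disjoint_left]
  intro X h1 h2
  exact h (h1.symm.trans h2)

lemma eta_lvl_sum (η : Measure (Submodule F (Vinf F))) (m : ℕ) (A : Set (Submodule F (Vinf F)))
    (hA : lvl m A) (Q : Finset (Submodule F (Vinf F))) (hQ : ∀ Y, Y ∈ Q ↔ Y ≤ Vn F m ∧ Y ∈ A) :
    η A = ∑ Y ∈ Q, η {X | X ⊓ Vn F m = Y} := by
  have e : A = ⋃ Y ∈ Q, {X | X ⊓ Vn F m = Y} := by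
    conv_lhs => rw [lvl_eq_biUnion hA]
    ext X
    simp [hQ]
  conv_lhs => rw [e]
  exact measure_biUnion_finset (disj_cyl m _) fun Y _ => measurableSet_cyl m Y

lemma eta_swap_cyl (t₁ t₂ : ℝ) (η : Measure (Submodule F (Vinf F)))
    (hinv : ∀ b ∈ Bgrp F, ∀ A : Set (Submodule F (Vinf F)), MeasurableSet A →
      η (gact b ⁻¹' A) = η A)
    (hpat : ∀ (m : ℕ) (c : Fin m → Bool), η {X | ∀ i : Fin m, sy X i ↔ c i = true} =
      ∏ i : Fin m, ENNReal.ofReal (if c i then t₁ else t₂))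
    (n m : ℕ) (hm : n + 2 ≤ m) (Y : Submodule F (Vinf F)) (hY : Y ≤ Vn F m)
    (hY0 : sy Y n) (hY1 : ¬ sy Y (n + 1)) :
    η {X | X ⊓ Vn F m = Y} = Fintype.card F * η (gact (sw n) ⁻¹' {X | X ⊓ Vn F m = Y}) := by
  classical
  let c : Fin m → Bool := fun i => decide (sy Y i)
  let σ : Equiv.Perm (Fin m) := Equiv.swap ⟨n, by omega⟩ ⟨n + 1, by omega⟩
  let T : Set (Submodule F (Vinf F)) := {X | ∀ i : Fin m, sy X i ↔ c i = true}
  let R : Set (Submodule F (Vinf F)) := {X | ∀ i : Fin m, sy X i ↔ c (σ i) = true}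
  have hσ : ∀ i : Fin m, ((σ i : Fin m) : ℕ) = Equiv.swap n (n + 1) (i : ℕ) := by
    intro i
    simp only [σ, Equiv.swap_apply_def, Fin.ext_iff]
    split_ifs <;> rfl
  have hTl : lvl m T := by
    intro X X' e h i
    rw [← h i, ← sy_inf i.2, ← e, sy_inf i.2]
  have hTR : η T = η R := by
    rw [hpat m c, hpat m (fun i => c (σ i))]
    exact (Equiv.prod_comp σ (fun i => ENNReal.ofReal (if c i then t₁ else t₂))).symm
  have hT : ∀ X ∈ T, sy X n ∧ ¬ sy X (n + 1) := by
    intro X hX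
    have h1 := hX ⟨n, by omega⟩
    have h2 := hX ⟨n + 1, by omega⟩
    simp only [c, decide_eq_true_eq] at h1 h2
    exact ⟨h1.2 hY0, fun h => hY1 (h2.1 h)⟩
  have hfin : {Z : Submodule F (Vinf F) | Z ≤ Vn F m ∧ Z ∈ T}.Finite :=
    (finite_le_Vn m).subset fun Z hZ => hZ.1
  let Q := hfin.toFinset
  have hQ : ∀ Z, Z ∈ Q ↔ Z ≤ Vn F m ∧ Z ∈ T := fun Z => by simp [Q]
  have hQsy : ∀ Z ∈ Q, ∀ i, sy Z i ↔ sy Y i := by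
    intro Z hZ i
    by_cases hi : i < m
    · have := ((hQ Z).1 hZ).2 ⟨i, hi⟩
      simpa [c] using this
    · exact iff_of_false (sy_of_le ((hQ Z).1 hZ).1 (by omega)) (sy_of_le hY (by omega))
  have hYQ : Y ∈ Q := (hQ Y).2 ⟨hY, fun i => by simp [c]⟩
  have hηT : η T = Q.card * η {X | X ⊓ Vn F m = Y} := by
    rw [eta_lvl_sum η m T hTl Q hQ, Finset.sum_congr rfl
      (fun Z hZ => eta_cyl_eq η hinv m Z Y (hQsy Z hZ))]
    simp
  -- swapped
  have hswap : ∀ Z : Submodule F (Vinf F), sy Z n → ¬ sy Z (n + 1) → ∀ i,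
      sy (gact (sw n) Z) i ↔ sy Z (Equiv.swap n (n + 1) i) := by
    intro Z h0 h1 i
    have := sy_h_swap n (0 : F) (gact (sw n) Z)
    rw [ut_zero, gact_sw_sw] at this
    exact this h0 h1 i
  have hηT' : η (gact (sw n) ⁻¹' T) = Q.card * η (gact (sw n) ⁻¹' {X | X ⊓ Vn F m = Y}) := by
    have e : gact (sw n) ⁻¹' T = ⋃ Z ∈ Q, gact (sw n) ⁻¹' {X | X ⊓ Vn F m = Z} := by
      conv_lhs => rw [lvl_eq_biUnion hTl]
      ext X
      simp [hQ]
    rw [e, measure_biUnion_finset]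
    · have : ∀ Z ∈ Q, η (gact (sw n) ⁻¹' {X | X ⊓ Vn F m = Z})
          = η (gact (sw n) ⁻¹' {X | X ⊓ Vn F m = Y}) := by
        intro Z hZ
        rw [sw_cyl n m hm, sw_cyl n m hm]
        refine eta_cyl_eq η hinv m _ _ fun i => ?_
        have h1 := hT Z ((hQ Z).1 hZ).2
        rw [hswap Z h1.1 h1.2, hswap Y hY0 hY1, hQsy Z hZ]
      rw [Finset.sum_congr rfl this]
      simp
    · intro Z hZ W hW h
      exact (disj_cyl m Set.univ (Set.mem_univ Z) (Set.mem_univ W) h).preimage _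
    · intro Z _
      exact measurable_gact (sw_mem_GLB n) (measurableSet_cyl m Z)
  have hmT' : MeasurableSet (gact (sw n) ⁻¹' T) :=
    measurable_gact (sw_mem_GLB n) (lvl_measurable hTl)
  have hR : R = ⋃ a ∈ (Finset.univ : Finset F), gact (ut n a) ⁻¹' (gact (sw n) ⁻¹' T) := by
    ext X
    simp only [Finset.mem_univ, Set.iUnion_true, Set.mem_iUnion, Set.mem_preimage]
    constructor
    · intro hX
      have h1 := hX ⟨n, by omega⟩
      have h2 := hX ⟨n + 1, by omega⟩
      simp only [c, decide_eq_true_eq, hσ, Equiv.swap_apply_left, Equiv.swap_apply_right] at h1 h2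
      obtain ⟨a, ha0, ha1⟩ := h_exists n X (fun h => hY1 (h1.1 h)) (h2.2 hY0)
      refine ⟨a, fun i => ?_⟩
      have h3 := sy_h_swap n a X ha0 ha1 (σ i)
      rw [hσ, Equiv.swap_apply_self] at h3
      rw [← h3]
      have h4 := hX (σ i)
      rw [hσ] at h4
      rw [h4]
      simp [σ]
    · rintro ⟨a, ha⟩ i
      have h1 := hT _ ha
      rw [sy_h_swap n a X h1.1 h1.2 i, ← hσ]
      exact ha (σ i)
  have hηR : η R = Fintype.card F * η (gact (sw n) ⁻¹' T) := by
    rw [hR, measure_biUnion_finset]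
    · rw [Finset.sum_congr rfl (fun a _ => hinv _ (ut_mem_B n a) _ hmT')]
      simp
    · intro a _ d _ h
      rw [Function.onFun, Set.disjoint_left]
      intro X h1 h2
      exact h (h_unique n a d X (hT _ h1).1 (hT _ h2).2)
    · intro a _
      exact measurable_gact (B_le_GLB (ut_mem_B n a)) hmT'
  have hfinal : (Q.card : ENNReal) * η {X | X ⊓ Vn F m = Y} =
      Q.card * (Fintype.card F * η (gact (sw n) ⁻¹' {X | X ⊓ Vn F m = Y})) := by
    rw [← hηT, hTR, hηR, hηT']; ring
  have hQ0 : (Q.card : ENNReal) ≠ 0 := by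
    simpa using Finset.ne_empty_of_mem hYQ
  exact (ENNReal.mul_right_inj hQ0 (ENNReal.natCast_ne_top _)).1 hfinal

/-- the set of subspaces with pattern (1,0) at n, n+1 -/
def S10 (F : Type) [Field F] (n : ℕ) : Set (Submodule F (Vinf F)) := {X | sy X n ∧ ¬ sy X (n + 1)}

lemma lvl_S10 (n : ℕ) : lvl (n + 2) (S10 F n) :=
  lvl_inter (lvl_sy (n + 2) n (by omega)) (lvl_compl (lvl_sy (n + 2) (n + 1) (by omega)))

lemma eta_swap (t₁ t₂ : ℝ) (η : Measure (Submodule F (Vinf F))) [IsFiniteMeasure η]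
    (hinv : ∀ b ∈ Bgrp F, ∀ A : Set (Submodule F (Vinf F)), MeasurableSet A →
      η (gact b ⁻¹' A) = η A)
    (hpat : ∀ (m : ℕ) (c : Fin m → Bool), η {X | ∀ i : Fin m, sy X i ↔ c i = true} =
      ∏ i : Fin m, ENNReal.ofReal (if c i then t₁ else t₂))
    (n : ℕ) (A : Set (Submodule F (Vinf F))) (hA : MeasurableSet A) (hAS : A ⊆ S10 F n) :
    η A = Fintype.card F * η (gact (sw n) ⁻¹' A) := by
  have hmsw : Measurable (gact (F := F) (sw n)) := measurable_gact (sw_mem_GLB n)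
  have hmS : MeasurableSet (S10 F n) := lvl_measurable (lvl_S10 n)
  have hlev : ∀ A ∈ alg F, η (A ∩ S10 F n) = Fintype.card F * η (gact (sw n) ⁻¹' (A ∩ S10 F n)) := by
    rintro A ⟨m₀, hA⟩
    obtain ⟨m, hm0, hm⟩ : ∃ m, m₀ ≤ m ∧ n + 2 ≤ m := ⟨max m₀ (n + 2), by simp, by simp⟩
    have hl : lvl m (A ∩ S10 F n) := lvl_inter (lvl_mono hm0 hA) (lvl_mono hm (lvl_S10 n))
    have hfin : {Z : Submodule F (Vinf F) | Z ≤ Vn F m ∧ Z ∈ A ∩ S10 F n}.Finite :=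
      (finite_le_Vn m).subset fun Z hZ => hZ.1
    have hQ : ∀ Z, Z ∈ hfin.toFinset ↔ Z ≤ Vn F m ∧ Z ∈ A ∩ S10 F n := fun Z => by simp
    have e : gact (sw n) ⁻¹' (A ∩ S10 F n)
        = ⋃ Z ∈ hfin.toFinset, gact (sw n) ⁻¹' {X | X ⊓ Vn F m = Z} := by
      conv_lhs => rw [lvl_eq_biUnion hl]
      ext X
      simp
    rw [eta_lvl_sum η m _ hl _ hQ, e, measure_biUnion_finset, Finset.mul_sum]
    · refine Finset.sum_congr rfl fun Z hZ => ?_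
      have hZ' := (hQ Z).1 hZ
      exact eta_swap_cyl t₁ t₂ η hinv hpat n m hm Z hZ'.1 hZ'.2.2.1 hZ'.2.2.2
    · intro Z hZ W hW h
      exact (disj_cyl m Set.univ (Set.mem_univ Z) (Set.mem_univ W) h).preimage _
    · intro Z _
      exact hmsw (measurableSet_cyl m Z)
  let ν : Measure (Submodule F (Vinf F)) :=
    ((Fintype.card F : ENNReal) • (η.map (gact (sw n)))).restrict (S10 F n)
  have hν : ∀ A, MeasurableSet A → ν A = Fintype.card F * η (gact (sw n) ⁻¹' (A ∩ S10 F n)) := by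
    intro A hA
    simp only [ν]
    rw [Measure.restrict_apply hA, Measure.smul_apply, Measure.map_apply hmsw (hA.inter hmS)]
    rfl
  have hmeas : ∀ A ∈ alg F, MeasurableSet A := fun A ⟨m, h⟩ => lvl_measurable h
  have heq : η.restrict (S10 F n) = ν := by
    have h1 : ∀ A ∈ alg F, η.restrict (S10 F n) A = ν A := by
      intro A hA
      rw [Measure.restrict_apply (hmeas A hA), hν A (hmeas A hA), hlev A hA]
    refine ext_of_generate_finite (alg F) alg_generate ?_ h1 (h1 _ alg_isSetAlgebra.univ_mem)
    intro A hA C hC _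
    exact alg_isSetAlgebra.inter_mem hA hC
  have h2 := hν A hA
  rw [← heq, Measure.restrict_apply hA, Set.inter_eq_left.2 hAS] at h2
  exact h2

lemma ber_indep (t₁ t₂ : ℝ) (μBer : Measure (ℕ → Bool))
    (hBer : ∀ (n : ℕ) (c : Fin n → Bool),
      μBer {ω | ∀ i : Fin n, ω (i : ℕ) = c i}
        = ∏ i : Fin n, ENNReal.ofReal (if c i then t₁ else t₂)) (n : ℕ) (T : Set (ℕ → Bool))
    (hT : ∀ x y : ℕ → Bool, (∀ i < n, x i = y i) → x ∈ T → y ∈ T) :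
    μBer (T ∩ {x | x n = true ∧ x (n + 1) = false})
      = ENNReal.ofReal t₁ * ENNReal.ofReal t₂ * μBer T := by
  classical
  have hmc : ∀ (m : ℕ) (c : Fin m → Bool),
      MeasurableSet {ω : ℕ → Bool | ∀ i : Fin m, ω (i : ℕ) = c i} := by
    intro m c
    rw [Set.ofPred_forall]
    refine MeasurableSet.iInter fun i => ?_
    have h := measurable_pi_apply (X := fun _ : ℕ => Bool) (i : ℕ) (MeasurableSet.singleton (c i))
    exact h
  let Q : Finset (Fin n → Bool) := Finset.univ.filter fun c => ∃ ω ∈ T, ∀ i : Fin n, ω (i : ℕ) = c i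
  have e1 : T = ⋃ c ∈ Q, {ω : ℕ → Bool | ∀ i : Fin n, ω (i : ℕ) = c i} := by
    ext x
    simp only [Set.mem_iUnion, exists_prop, Set.mem_ofPred_eq, Q, Finset.mem_filter,
      Finset.mem_univ, true_and]
    constructor
    · intro hx; exact ⟨fun i => x i, ⟨x, hx, fun _ => rfl⟩, fun _ => rfl⟩
    · rintro ⟨c, ⟨ω, hω, h1⟩, h2⟩
      exact hT ω x (fun i hi => (h1 ⟨i, hi⟩).trans (h2 ⟨i, hi⟩).symm) hω
  let d : (Fin n → Bool) → Fin (n + 2) → Bool := fun c =>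
    Fin.snoc (α := fun _ => Bool) (Fin.snoc (α := fun _ => Bool) c true) false
  have hd : ∀ (c : Fin n → Bool) (x : ℕ → Bool), (∀ i : Fin (n + 2), x (i : ℕ) = d c i) ↔
      (∀ i : Fin n, x (i : ℕ) = c i) ∧ x n = true ∧ x (n + 1) = false := by
    intro c x
    rw [Fin.forall_fin_succ', Fin.forall_fin_succ']
    simp [d, and_assoc]
  have e2 : T ∩ {x | x n = true ∧ x (n + 1) = false}
      = ⋃ c ∈ Q, {ω : ℕ → Bool | ∀ i : Fin (n + 2), ω (i : ℕ) = d c i} := by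
    conv_lhs => rw [e1]
    ext x
    simp only [Set.mem_iUnion, exists_prop, Set.mem_ofPred_eq, hd, Set.mem_inter_iff]
    constructor
    · rintro ⟨⟨c, h1, h2⟩, h3⟩; exact ⟨c, h1, h2, h3⟩
    · rintro ⟨c, h1, h2, h3⟩; exact ⟨⟨c, h1, h2⟩, h3⟩
  have dj : ∀ c c' : Fin n → Bool, c ≠ c' → Disjoint {ω : ℕ → Bool | ∀ i : Fin n, ω (i : ℕ) = c i}
      {ω : ℕ → Bool | ∀ i : Fin n, ω (i : ℕ) = c' i} := by
    intro c c' h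
    rw [Set.disjoint_left]
    intro x h1 h2
    exact h (funext fun i => (h1 i).symm.trans (h2 i))
  rw [e2, measure_biUnion_finset]
  · conv_rhs => rw [e1]
    rw [measure_biUnion_finset (fun c _ c' _ h => dj c c' h) (fun c _ => hmc n c), Finset.mul_sum]
    refine Finset.sum_congr rfl fun c _ => ?_
    rw [hBer, hBer, Fin.prod_univ_castSucc, Fin.prod_univ_castSucc]
    simp only [d, Fin.snoc_castSucc, Fin.snoc_last]
    simp only [if_true, Bool.false_eq_true, if_false]
    ring
  · intro c _ c' _ h
    refine (dj c c' h).mono ?_ ?_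
    · intro x hx; exact ((hd c x).1 hx).1
    · intro x hx; exact ((hd c' x).1 hx).1
  · intro c _; exact hmc _ _

lemma eta_indep (t₁ t₂ : ℝ) (μBer : Measure (ℕ → Bool)) [IsProbabilityMeasure μBer]
    (hBer : ∀ (n : ℕ) (c : Fin n → Bool),
      μBer {ω | ∀ i : Fin n, ω (i : ℕ) = c i}
        = ∏ i : Fin n, ENNReal.ofReal (if c i then t₁ else t₂))
    (μB : Measure ↥(Bgrp F)) [IsProbabilityMeasure μB]
    (η : Measure (Submodule F (Vinf F)))
    (hη : ∀ A : Set (Submodule F (Vinf F)), MeasurableSet A →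
      η A = (μBer.prod μB) (phiMap F ⁻¹' A)) (n : ℕ) (C : Set (Submodule F (Vinf F)))
    (hC : lvl n C) :
    η (C ∩ S10 F n) = ENNReal.ofReal t₁ * ENNReal.ofReal t₂ * η C := by
  have hCm := lvl_measurable hC
  have hSm := lvl_measurable (lvl_S10 (F := F) n)
  rw [hη _ (hCm.inter hSm), hη _ hCm, Measure.prod_apply_symm (measurable_phiMap (hCm.inter hSm)),
    Measure.prod_apply_symm (measurable_phiMap hCm),
    ← lintegral_const_mul' _ _ (ENNReal.mul_ne_top ENNReal.ofReal_ne_top ENNReal.ofReal_ne_top)]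
  refine lintegral_congr fun b => ?_
  rw [← ber_indep t₁ t₂ μBer hBer n]
  · congr 1
    ext x
    simp [S10, sy_phiMap]
  · intro x y h hx
    exact hC _ _ (phiMap_level n (x, b) (y, b) h fun _ _ => rfl) hx

end helpers

/-- **Proposition 5.8** (nonexistence of an equivalent invariant measure on the grassmannian).
Let `t₁, t₂ > 0` with `t₁ + t₂ = 1`, and let `η = η_{t₁,t₂}` be the pushforward of
`μBer ⊗ μB` (Bernoulli times Haar) under `φ(x,g) = g·C(x)`. Then there is no σ-finite
`GLB`-invariant measure on `Gr(V)` that is equivalent to `η`. -/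
theorem no_equivalent_invariant_measure
    (t₁ t₂ : ℝ) (ht₁ : 0 < t₁) (ht₂ : 0 < t₂) (hsum : t₁ + t₂ = 1)
    (μBer : Measure (ℕ → Bool))
    (hBer : ∀ (n : ℕ) (c : Fin n → Bool),
      μBer {ω | ∀ i : Fin n, ω (i : ℕ) = c i}
        = ∏ i : Fin n, ENNReal.ofReal (if c i then t₁ else t₂))
    (μB : Measure ↥(Bgrp F)) (hμBprob : IsProbabilityMeasure μB)
    (hμBinv : ∀ (b : ↥(Bgrp F)) (S : Set ↥(Bgrp F)), MeasurableSet S →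
      μB ((fun x => b * x) ⁻¹' S) = μB S)
    (η : Measure (Submodule F (Vinf F)))
    (hη : ∀ A : Set (Submodule F (Vinf F)), MeasurableSet A →
      η A = (μBer.prod μB) (phiMap F ⁻¹' A)) :
    ¬ ∃ φ : Measure (Submodule F (Vinf F)),
      SigmaFinite φ ∧
      (∀ g : (Vinf F) ≃ₗ[F] (Vinf F), g ∈ GLBgrp F →
        ∀ A : Set (Submodule F (Vinf F)), MeasurableSet A →
        φ ((fun X => Submodule.map (g : (Vinf F) →ₗ[F] (Vinf F)) X) '' A) = φ A) ∧
      (∀ A : Set (Submodule F (Vinf F)), MeasurableSet A → (φ A = 0 ↔ η A = 0)) := by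
  rintro ⟨φ, hσ, hφinv, hequiv⟩
  have hBp : IsProbabilityMeasure μBer := by
    constructor
    have := hBer 0 (fun i => i.elim0)
    simpa using this
  have hηp : IsProbabilityMeasure η := by
    constructor
    rw [hη _ MeasurableSet.univ, Set.preimage_univ, measure_univ]
  have hinv := eta_B μBer μB hμBinv η hη
  have hpat := eta_pattern t₁ t₂ μBer hBer μB η hη
  have hac : φ ≪ η := Measure.AbsolutelyContinuous.mk fun A hA h => (hequiv A hA).2 h
  have hac' : η ≪ φ := Measure.AbsolutelyContinuous.mk fun A hA h => (hequiv A hA).1 h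
  set f := φ.rnDeriv η with hf
  have hfm : Measurable f := Measure.measurable_rnDeriv φ η
  have hφ : η.withDensity f = φ := Measure.withDensity_rnDeriv_eq φ η hac
  have hpos : ∀ᵐ x ∂η, 0 < f x := hac'.ae_le (Measure.rnDeriv_pos hac)
  have hlt : ∀ᵐ x ∂η, f x < ⊤ := Measure.rnDeriv_lt_top φ η
  let r : ENNReal := ((3 / 2 : NNReal) : ENNReal)
  have hr1 : 1 < r := by
    simp only [r]
    rw [ENNReal.one_lt_coe_iff]
    rw [lt_div_iff₀ (by norm_num)]; norm_num
  have hrt : r ≠ ⊤ := ENNReal.coe_ne_top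
  have hr0 : r ≠ 0 := (zero_lt_one.trans hr1).ne'
  obtain ⟨k, hk⟩ : ∃ k : ℤ, η (f ⁻¹' Set.Ico (r ^ k) (r ^ (k + 1))) ≠ 0 := by
    by_contra! h
    have h1 : η (⋃ k : ℤ, f ⁻¹' Set.Ico (r ^ k) (r ^ (k + 1))) = 0 := measure_iUnion_null h
    have h2 : ∀ᵐ x ∂η, x ∈ ⋃ k : ℤ, f ⁻¹' Set.Ico (r ^ k) (r ^ (k + 1)) := by
      filter_upwards [hpos, hlt] with x h1 h2
      obtain ⟨k, hk⟩ := ENNReal.exists_mem_Ico_zpow h1.ne' h2.ne hr1 hrt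
      exact Set.mem_iUnion.2 ⟨k, hk⟩
    have h3 := (prob_compl_eq_zero_iff (MeasurableSet.iUnion fun k : ℤ =>
      hfm (measurableSet_Ico (a := r ^ k) (b := r ^ (k + 1))))).1 h2
    rw [h1] at h3
    exact zero_ne_one h3
  set a := r ^ k with ha
  have ha0 : a ≠ 0 := (ENNReal.zpow_pos hr0 hrt k).ne'
  have hat : a ≠ ⊤ := (ENNReal.zpow_lt_top hr0 hrt k).ne
  have har : r ^ (k + 1) = a * r := by
    rw [ENNReal.zpow_add hr0 hrt, zpow_one]
  rw [har] at hk
  set E := f ⁻¹' Set.Ico a (a * r) with hE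
  have hEm : MeasurableSet E := hfm measurableSet_Ico
  have hlow : ∀ A, MeasurableSet A → A ⊆ E → a * η A ≤ φ A := by
    intro A hA hAE
    rw [← hφ, withDensity_apply _ hA, ← setLIntegral_const]
    exact setLIntegral_mono hfm fun x hx => (hAE hx).1
  have hup : ∀ A, MeasurableSet A → A ⊆ E → φ A ≤ a * r * η A := by
    intro A hA hAE
    rw [← hφ, withDensity_apply _ hA, ← setLIntegral_const]
    exact setLIntegral_mono measurable_const fun x hx => (hAE hx).2.le
  -- numbers
  have hq2 : 2 ≤ Fintype.card F := Fintype.one_lt_card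
  set q := Fintype.card F with hq
  have hEpos : 0 < η.real E := by
    rw [measureReal_def]
    exact ENNReal.toReal_pos hk (measure_ne_top _ _)
  obtain ⟨δ, hδ, hδ'⟩ : ∃ δ : ℝ, 0 < δ ∧ (1 + q) * δ < t₁ * t₂ * (η.real E - δ) := by
    have hD : (0 : ℝ) < 1 + q + t₁ * t₂ := by positivity
    refine ⟨t₁ * t₂ * η.real E / (2 * (1 + q + t₁ * t₂)), by positivity, ?_⟩
    have h1 : (1 + q + t₁ * t₂) * (t₁ * t₂ * η.real E / (2 * (1 + q + t₁ * t₂)))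
        = t₁ * t₂ * η.real E / 2 := by field_simp
    have h2 : 0 < t₁ * t₂ * η.real E := by positivity
    nlinarith
  obtain ⟨C, ⟨n, hC⟩, hEC⟩ := (Measure.MeasureDense.of_generateFrom_isSetAlgebra_finite
    (μ := η) alg_isSetAlgebra alg_generate).approx E hEm (measure_ne_top _ _) δ hδ
  have hEC' : η.real (symmDiff E C) < δ := by
    rw [measureReal_def]
    exact (ENNReal.toReal_lt_of_lt_ofReal hEC)
  have hCm : MeasurableSet C := lvl_measurable hC
  have hSm : MeasurableSet (S10 F n) := lvl_measurable (lvl_S10 n)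
  have hmsw : Measurable (gact (F := F) (sw n)) := measurable_gact (sw_mem_GLB n)
  have hswC : ∀ X, gact (sw n) X ∈ C ↔ X ∈ C := fun X =>
    ⟨fun h => hC _ _ (sw_inf n X) h, fun h => hC _ _ (sw_inf n X).symm h⟩
  have hswap := eta_swap t₁ t₂ η hinv hpat n
  set D := C ∩ S10 F n with hD
  have hDm : MeasurableSet D := hCm.inter hSm
  have hDη : η.real D = t₁ * t₂ * η.real C := by
    rw [measureReal_def, hD, eta_indep t₁ t₂ μBer hBer μB η hη n C hC, ENNReal.toReal_mul,
      ENNReal.toReal_mul, ENNReal.toReal_ofReal ht₁.le, ENNReal.toReal_ofReal ht₂.le, measureReal_def]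
  have hCE : η.real (C \ E) < δ :=
    (measureReal_mono (fun x hx => Or.inr hx)).trans_lt hEC'
  have hCη : η.real E - δ < η.real C := by
    have h1 : η.real E ≤ η.real (E \ C) + η.real C := by
      refine (measureReal_mono ?_).trans (measureReal_union_le _ _)
      intro x hx
      by_cases h : x ∈ C
      · exact Or.inr h
      · exact Or.inl ⟨hx, h⟩
    have h2 : η.real (E \ C) < δ := (measureReal_mono (fun x hx => Or.inl hx)).trans_lt hEC'
    linarith
  set A := D ∩ E ∩ gact (sw n) ⁻¹' E with hA
  have hAm : MeasurableSet A := (hDm.inter hEm).inter (hmsw hEm)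
  have hD1 : η.real (D \ gact (sw n) ⁻¹' E) ≤ q * η.real (C \ E) := by
    have h1 := hswap (D \ gact (sw n) ⁻¹' E) (hDm.diff (hmsw hEm)) (fun x hx => hx.1.2)
    rw [measureReal_def, h1, ENNReal.toReal_mul, ENNReal.toReal_natCast]
    refine mul_le_mul_of_nonneg_left ?_ (by positivity)
    refine measureReal_mono ?_
    intro X hX
    refine ⟨(hswC X).1 hX.1.1, fun h => hX.2 ?_⟩
    show gact (sw n) (gact (sw n) X) ∈ E
    rwa [gact_sw_sw]
  have hAη : 0 < η.real A := by
    have h1 : η.real D ≤ η.real A + η.real (C \ E) + η.real (D \ gact (sw n) ⁻¹' E) := by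
      refine (measureReal_mono ?_).trans ((measureReal_union_le (A ∪ (C \ E)) _).trans
        (add_le_add (measureReal_union_le _ _) le_rfl))
      intro x hx
      by_cases h1 : x ∈ E
      · by_cases h2 : x ∈ gact (sw n) ⁻¹' E
        · exact Or.inl (Or.inl ⟨⟨hx, h1⟩, h2⟩)
        · exact Or.inr ⟨hx, h2⟩
      · exact Or.inl (Or.inr ⟨hx.1, h1⟩)
    have h2 : (q : ℝ) * η.real (C \ E) ≤ q * δ := by gcongr
    have h3 : t₁ * t₂ * (η.real E - δ) ≤ t₁ * t₂ * η.real C := by gcongr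
    nlinarith
  have hA0 : η A ≠ 0 := fun h => by
    rw [measureReal_def, h] at hAη; simp at hAη
  have himg : (fun X => Submodule.map ((sw n : (Vinf F) ≃ₗ[F] (Vinf F)) :
      (Vinf F) →ₗ[F] (Vinf F)) X) '' A = gact (sw n) ⁻¹' A := by
    ext X
    constructor
    · rintro ⟨Z, hZ, rfl⟩
      show gact (sw n) (gact (sw n) Z) ∈ A
      rwa [gact_sw_sw]
    · intro h
      exact ⟨gact (sw n) X, h, gact_sw_sw n X⟩
  have h1 := hφinv (sw n) (sw_mem_GLB n) A hAm
  rw [himg] at h1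
  have h2 := hlow A hAm (fun x hx => hx.1.2)
  have h3 := hup (gact (sw n) ⁻¹' A) (hmsw hAm) (by
    intro X hX
    have : gact (sw n) (gact (sw n) X) ∈ E := hX.2
    rwa [gact_sw_sw] at this)
  have h4 := hswap A hAm (fun x hx => hx.1.1.2)
  rw [h1] at h3
  have h5 := h2.trans h3
  rw [h4, mul_assoc, ENNReal.mul_le_mul_iff_right ha0 hat] at h5
  have hx0 : η (gact (sw n) ⁻¹' A) ≠ 0 := by
    intro h; rw [h, mul_zero] at h4; exact hA0 h4
  rw [ENNReal.mul_le_mul_iff_left hx0 (measure_ne_top _ _)] at h5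
  have h6 : ((q : NNReal) : ENNReal) ≤ ((3 / 2 : NNReal) : ENNReal) := by simpa [r] using h5
  rw [ENNReal.coe_le_coe, le_div_iff₀ (by norm_num)] at h6
  have h7 : q * 2 ≤ 3 := by exact_mod_cast h6
  omega
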